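/- Let H : ℝ → Herm(n) be real-analytic in a neighborhood of 0 (each H(t) an n×n complex Hermitian matrix). Then there exist ε > 0 and a permutation σ of {1,…,n} such that for each i ∈ {1,…,n} the function λ̃_i : (−ε,ε) → ℝ defined by λ̃_i(t) = λ_i(H(t)) for t ≥ 0 and λ̃_i(t) = λ_{σ(i)}(H(t)) for t < 0 is real-analytic on (−ε,ε). In particular, for every t ∈ (−ε,ε), the multiset {λ̃_1(t),…,λ̃_n(t)} equals the multiset of eigenvalues of H(t) counted with multiplicity. -/

import Mathlib

open Matrix

attribute [local instance] Matrix.normedAddCommGroup Matrix.normedSpace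

noncomputable section

/-- Sorted eigenvalues (increasing, counted with multiplicity) of a Hermitian matrix
(junk value for non-Hermitian matrices). -/
def eigs {n : ℕ} (H : Matrix (Fin n) (Fin n) ℂ) : Fin n → ℝ :=
  if hH : H.IsHermitian then hH.eigenvalues ∘ Tuple.sort hH.eigenvalues else fun _ => 0

/-!
The characteristic polynomials form an analytic family of monic real polynomials that split, so it
suffices to choose the roots of such a family analytically near `x`, by induction on the degree.
Translating by the mean of the roots makes the roots sum to zero. If all of them are then zero near
`x` there is nothing to do. Otherwise the sum of their squares is `-2` times the second subleading
coefficient, hence vanishes at `x` to some even order `2 * m`, so every root is `O((t - x) ^ m)`;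
dividing the roots by `(t - x) ^ m` keeps the coefficients analytic and leaves a polynomial at `x`
with at least two distinct roots. By Hensel's lemma, i.e. the inverse function theorem for the
multiplication of coprime monic polynomials, it factors analytically into families of lower degree.

Two analytic functions keep their order on each side of `x`, so on each side a single permutation
sorts the branches into increasing order.
-/

section
open Polynomial Filter Topology

section InverseFunction
variable {𝕜 E F : Type*} [NontriviallyNormedField 𝕜]
  [NormedAddCommGroup E] [NormedSpace 𝕜 E] [NormedAddCommGroup F] [NormedSpace 𝕜 F]
  {f : E → F} {x : E}

lemma exists_analyticAt_rightInverse [CompleteSpace E] {f' : E ≃L[𝕜] F}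
    (hf : AnalyticAt 𝕜 f x) (hf' : fderiv 𝕜 f x = f') :
    ∃ g : F → E, AnalyticAt 𝕜 g (f x) ∧ g (f x) = x ∧ ∀ᶠ y in 𝓝 (f x), f (g y) = y := by
  have hs : HasStrictFDerivAt f (f' : E →L[𝕜] F) x := hf' ▸ hf.hasStrictFDerivAt
  exact ⟨hs.localInverse f f' x,
    (hs.toOpenPartialHomeomorph f).analyticAt_symm' hs.mem_toOpenPartialHomeomorph_source hf hf',
    hs.localInverse_apply_image, hs.eventually_right_inverse⟩

lemma exists_analyticAt_rightInverse_of_injective [CompleteSpace 𝕜]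
    [FiniteDimensional 𝕜 E] [FiniteDimensional 𝕜 F]
    (hf : AnalyticAt 𝕜 f x) (hinj : Function.Injective (fderiv 𝕜 f x))
    (hdim : Module.finrank 𝕜 E = Module.finrank 𝕜 F) :
    ∃ g : F → E, AnalyticAt 𝕜 g (f x) ∧ g (f x) = x ∧ ∀ᶠ y in 𝓝 (f x), f (g y) = y := by
  have := FiniteDimensional.complete 𝕜 E
  have := FiniteDimensional.complete 𝕜 F
  exact exists_analyticAt_rightInverse hf (f' := (LinearEquiv.ofInjectiveOfFinrankEq
    (fderiv 𝕜 f x : E →ₗ[𝕜] F) hinj hdim).toContinuousLinearEquiv) rfl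

end InverseFunction

section MonicOfCoeffs
variable {R : Type*} [CommRing R] {n : ℕ}

/-- The monic polynomial `X ^ n + ∑ i, a i * X ^ i` of degree `n`, so that `Fin n → R` serves as a
coordinate space for the monic polynomials of degree `n`. -/
def monicOfCoeffs (a : Fin n → R) : R[X] :=
  X ^ n + ((degreeLTEquiv R n).symm a : R[X])

lemma monicOfCoeffs_monic (a : Fin n → R) : (monicOfCoeffs a).Monic :=
  monic_X_pow_add (mem_degreeLT.1 ((degreeLTEquiv R n).symm a).2)

lemma monicOfCoeffs_natDegree [Nontrivial R] (a : Fin n → R) :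
    (monicOfCoeffs a).natDegree = n :=
  natDegree_eq_of_degree_eq_some <| by
    rw [monicOfCoeffs, degree_add_eq_left_of_degree_lt] <;> rw [degree_X_pow]
    exact mem_degreeLT.1 ((degreeLTEquiv R n).symm a).2

lemma monicOfCoeffs_coeff (a : Fin n → R) (i : Fin n) : (monicOfCoeffs a).coeff i = a i := by
  rw [monicOfCoeffs, coeff_add, coeff_X_pow, if_neg i.2.ne, zero_add]
  exact congrFun ((degreeLTEquiv R n).apply_symm_apply a) i

lemma monic_ext {R : Type*} [Semiring R] {p q : R[X]} (hp : p.Monic) (hq : q.Monic)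
    (hpn : p.natDegree = n) (hqn : q.natDegree = n)
    (h : ∀ i < n, p.coeff i = q.coeff i) : p = q := by
  ext i
  rcases lt_trichotomy i n with hi | rfl | hi
  · exact h i hi
  · rw [← hpn, hp.coeff_natDegree, hpn, ← hqn, hq.coeff_natDegree]
  · rw [coeff_eq_zero_of_natDegree_lt (hpn.trans_lt hi),
      coeff_eq_zero_of_natDegree_lt (hqn.trans_lt hi)]

lemma monicOfCoeffs_coeff_eq [Nontrivial R] {p : R[X]} (hp : p.Monic) (hn : p.natDegree = n) :
    monicOfCoeffs (fun i : Fin n ↦ p.coeff i) = p :=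
  monic_ext (monicOfCoeffs_monic _) hp (monicOfCoeffs_natDegree _) hn
    fun i hi ↦ monicOfCoeffs_coeff _ ⟨i, hi⟩

lemma sylvesterMap_injective {f g : R[X]} {k l : ℕ} (hf : f.Monic) (hk : f.natDegree = k)
    (hl : g.natDegree = l) (hfg : IsCoprime f g) :
    Function.Injective (sylvesterMap f g hk.le hl.le) := by
  subst hk hl
  obtain ⟨u, hu⟩ := (isUnit_resultant_iff_isCoprime hf).2 hfg
  refine .of_comp (f := adjSylvester f g) ?_
  rw [← LinearMap.coe_comp, adjSylvester_comp_sylveserMap, ← hu]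
  exact fun _ _ h ↦ smul_left_cancel u h

end MonicOfCoeffs

section Hensel
variable {𝕜 : Type*} [NontriviallyNormedField 𝕜] {k l n : ℕ}

/-- Multiplication of monic polynomials of degrees `k` and `l`, in coordinates. -/
def mulCoeffs (x : (Fin k → 𝕜) × (Fin l → 𝕜)) : Fin (k + l) → 𝕜 :=
  fun j ↦ (monicOfCoeffs x.1 * monicOfCoeffs x.2).coeff j

lemma monicOfCoeffs_mulCoeffs (x : (Fin k → 𝕜) × (Fin l → 𝕜)) :
    monicOfCoeffs (mulCoeffs x) = monicOfCoeffs x.1 * monicOfCoeffs x.2 :=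
  monicOfCoeffs_coeff_eq ((monicOfCoeffs_monic _).mul (monicOfCoeffs_monic _)) <| by
    rw [(monicOfCoeffs_monic _).natDegree_mul (monicOfCoeffs_monic _), monicOfCoeffs_natDegree,
      monicOfCoeffs_natDegree]

variable [CompleteSpace 𝕜]

/-- The `j`-th coefficient of a polynomial of degree `< n` as a continuous linear function of its
coordinates; it is the derivative of the `j`-th coefficient of `monicOfCoeffs`. -/
def coeffCLM (𝕜 : Type*) [NontriviallyNormedField 𝕜] [CompleteSpace 𝕜] (n j : ℕ) :
    (Fin n → 𝕜) →L[𝕜] 𝕜 :=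
  (lcoeff 𝕜 j ∘ₗ (degreeLT 𝕜 n).subtype ∘ₗ
    (degreeLTEquiv 𝕜 n).symm.toLinearMap).toContinuousLinearMap

lemma monicOfCoeffs_coeff_eq_add_coeffCLM (a : Fin n → 𝕜) (j : ℕ) :
    (monicOfCoeffs a).coeff j = (X ^ n : 𝕜[X]).coeff j + coeffCLM 𝕜 n j a :=
  coeff_add _ _ _

lemma analyticAt_monicOfCoeffs_coeff (a : Fin n → 𝕜) (j : ℕ) :
    AnalyticAt 𝕜 (fun a : Fin n → 𝕜 ↦ (monicOfCoeffs a).coeff j) a := by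
  simp only [monicOfCoeffs_coeff_eq_add_coeffCLM]
  exact analyticAt_const.add ((coeffCLM 𝕜 n j).analyticAt a)

lemma hasFDerivAt_monicOfCoeffs_coeff (a : Fin n → 𝕜) (j : ℕ) :
    HasFDerivAt (fun a : Fin n → 𝕜 ↦ (monicOfCoeffs a).coeff j) (coeffCLM 𝕜 n j) a := by
  simp only [monicOfCoeffs_coeff_eq_add_coeffCLM]
  exact (coeffCLM 𝕜 n j).hasFDerivAt.const_add _

lemma analyticAt_mulCoeffs (x : (Fin k → 𝕜) × (Fin l → 𝕜)) : AnalyticAt 𝕜 mulCoeffs x := by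
  refine analyticAt_pi_iff.2 fun j ↦ ?_
  simp only [mulCoeffs, coeff_mul]
  exact Finset.analyticAt_fun_sum _ fun c _ ↦
    ((analyticAt_monicOfCoeffs_coeff x.1 c.1).comp analyticAt_fst).fun_mul
      ((analyticAt_monicOfCoeffs_coeff x.2 c.2).comp analyticAt_snd)

lemma fderiv_mulCoeffs_apply (x u : (Fin k → 𝕜) × (Fin l → 𝕜)) :
    fderiv 𝕜 mulCoeffs x u = degreeLTEquiv 𝕜 (k + l)
      (sylvesterMap (monicOfCoeffs x.1) (monicOfCoeffs x.2) (monicOfCoeffs_natDegree x.1).le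
        (monicOfCoeffs_natDegree x.2).le
        ((degreeLTEquiv 𝕜 k).symm u.1, (degreeLTEquiv 𝕜 l).symm u.2)) := by
  ext j
  have hcoord : HasFDerivAt (fun y : (Fin k → 𝕜) × (Fin l → 𝕜) ↦ mulCoeffs y j)
      (∑ c ∈ Finset.HasAntidiagonal.antidiagonal (j : ℕ),
        ((monicOfCoeffs x.1).coeff c.1 • (coeffCLM 𝕜 l c.2).comp (.snd 𝕜 _ _) +
          (monicOfCoeffs x.2).coeff c.2 • (coeffCLM 𝕜 k c.1).comp (.fst 𝕜 _ _))) x := by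
    simp only [mulCoeffs, coeff_mul]
    exact HasFDerivAt.fun_sum fun c _ ↦
      ((hasFDerivAt_monicOfCoeffs_coeff x.1 c.1).comp x hasFDerivAt_fst).fun_mul
        ((hasFDerivAt_monicOfCoeffs_coeff x.2 c.2).comp x hasFDerivAt_snd)
  have hD := hasFDerivAt_pi'.1 (analyticAt_mulCoeffs x).differentiableAt.hasFDerivAt j
  have h := DFunLike.congr_fun (hD.unique hcoord) u
  change _ = (monicOfCoeffs x.1 * ((degreeLTEquiv 𝕜 l).symm u.2 : 𝕜[X]) +
    monicOfCoeffs x.2 * ((degreeLTEquiv 𝕜 k).symm u.1 : 𝕜[X])).coeff j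
  rw [mul_comm (monicOfCoeffs x.2), coeff_add, coeff_mul, coeff_mul, ← Finset.sum_add_distrib]
  simpa [coeffCLM, mul_comm] using h

lemma fderiv_mulCoeffs_injective {x : (Fin k → 𝕜) × (Fin l → 𝕜)}
    (hx : IsCoprime (monicOfCoeffs x.1) (monicOfCoeffs x.2)) :
    Function.Injective (fderiv 𝕜 mulCoeffs x) := by
  have hfun : ⇑(fderiv 𝕜 mulCoeffs x) = _ := funext (fderiv_mulCoeffs_apply x)
  rw [hfun]
  exact (degreeLTEquiv 𝕜 (k + l)).injective.comp <|
    (sylvesterMap_injective (monicOfCoeffs_monic _) (monicOfCoeffs_natDegree _)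
      (monicOfCoeffs_natDegree _) hx).comp <|
    (degreeLTEquiv 𝕜 k).symm.injective.prodMap (degreeLTEquiv 𝕜 l).symm.injective

variable {E : Type*} [NormedAddCommGroup E] [NormedSpace 𝕜 E]

/-- A family of monic polynomials of degree `n` whose coefficients are analytic at `x`. -/
structure AnalyticMonicFamily (n : ℕ) (p : E → 𝕜[X]) (x : E) : Prop where
  monic : ∀ t, (p t).Monic
  natDegree_eq : ∀ t, (p t).natDegree = n
  analyticAt_coeff : ∀ j, AnalyticAt 𝕜 (fun t ↦ (p t).coeff j) x

lemma AnalyticMonicFamily.of_coeffs {a : E → Fin n → 𝕜} {x : E} (ha : AnalyticAt 𝕜 a x) :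
    AnalyticMonicFamily n (fun t ↦ monicOfCoeffs (a t)) x where
  monic t := monicOfCoeffs_monic (a t)
  natDegree_eq t := monicOfCoeffs_natDegree (a t)
  analyticAt_coeff j := (analyticAt_monicOfCoeffs_coeff (a x) j).comp ha

lemma AnalyticMonicFamily.exists_factorization {p : E → 𝕜[X]} {x : E}
    (hp : AnalyticMonicFamily n p x) {f g : 𝕜[X]} (hf : f.Monic) (hg : g.Monic)
    (hfg : IsCoprime f g) (hx : p x = f * g) :
    ∃ F G : E → 𝕜[X], AnalyticMonicFamily f.natDegree F x ∧ AnalyticMonicFamily g.natDegree G x ∧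
      F x = f ∧ G x = g ∧ ∀ᶠ t in 𝓝 x, p t = F t * G t := by
  obtain rfl : f.natDegree + g.natDegree = n := by
    rw [← hp.natDegree_eq x, hx, hf.natDegree_mul hg]
  set y : (Fin f.natDegree → 𝕜) × (Fin g.natDegree → 𝕜) := (fun i ↦ f.coeff i, fun i ↦ g.coeff i)
  set a : E → Fin (f.natDegree + g.natDegree) → 𝕜 := fun t i ↦ (p t).coeff i
  have hyf : monicOfCoeffs y.1 = f := monicOfCoeffs_coeff_eq hf rfl
  have hyg : monicOfCoeffs y.2 = g := monicOfCoeffs_coeff_eq hg rfl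
  have ha : AnalyticAt 𝕜 a x := analyticAt_pi_iff.2 fun i ↦ hp.analyticAt_coeff i
  have hax : mulCoeffs y = a x := by
    funext i
    simp only [mulCoeffs, hyf, hyg, a, hx]
  obtain ⟨Ψ, hΨ, hΨy, hinv⟩ := exists_analyticAt_rightInverse_of_injective
    (analyticAt_mulCoeffs y) (fderiv_mulCoeffs_injective (by rwa [hyf, hyg])) (by simp)
  rw [hax] at hΨ hΨy hinv
  have hΨa : AnalyticAt 𝕜 (fun t ↦ Ψ (a t)) x := hΨ.comp ha
  refine ⟨_, _, .of_coeffs (analyticAt_fst.comp hΨa), .of_coeffs (analyticAt_snd.comp hΨa),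
    by simp only [Function.comp_apply, hΨy, hyf], by simp only [Function.comp_apply, hΨy, hyg], ?_⟩
  filter_upwards [ha.continuousAt.eventually hinv] with t ht
  rw [← monicOfCoeffs_coeff_eq (hp.monic t) (hp.natDegree_eq t)]
  exact (congrArg monicOfCoeffs ht).symm.trans (monicOfCoeffs_mulCoeffs _)

lemma AnalyticMonicFamily.exists_factorization_of_isRoot {p : E → 𝕜[X]} {x : E}
    (hp : AnalyticMonicFamily n p x) {r s : 𝕜} (hrs : r ≠ s) (hr : (p x).IsRoot r)
    (hs : (p x).IsRoot s) :
    ∃ k l, k < n ∧ l < n ∧ k + l = n ∧ ∃ F G : E → 𝕜[X],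
      AnalyticMonicFamily k F x ∧ AnalyticMonicFamily l G x ∧ ∀ᶠ t in 𝓝 x, p t = F t * G t := by
  obtain ⟨g, hg, hrg⟩ := exists_eq_pow_rootMultiplicity_mul_and_not_dvd (p x) (hp.monic x).ne_zero r
  set k := (p x).rootMultiplicity r
  have hk : 0 < k := (rootMultiplicity_pos (hp.monic x).ne_zero).2 hr
  have hfm : ((X - C r) ^ k).Monic := (monic_X_sub_C r).pow k
  have hfk : ((X - C r) ^ k).natDegree = k := by
    rw [(monic_X_sub_C r).natDegree_pow, natDegree_X_sub_C, mul_one]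
  have hgm : g.Monic := hfm.of_mul_monic_left (hg ▸ hp.monic x)
  have hgs : g.IsRoot s := by
    have hs' : (p x).eval s = 0 := hs
    rw [hg, eval_mul, eval_pow, eval_sub, eval_X, eval_C] at hs'
    exact (mul_eq_zero.1 hs').resolve_left (pow_ne_zero k (sub_ne_zero.2 hrs.symm))
  have hl : 0 < g.natDegree :=
    natDegree_pos_iff_degree_pos.2 (degree_pos_of_root hgm.ne_zero hgs)
  have hn : k + g.natDegree = n := by
    rw [← hp.natDegree_eq x, hg, hfm.natDegree_mul hgm, hfk]
  obtain ⟨F, G, hF, hG, -, -, hFG⟩ := hp.exists_factorization hfm hgm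
    (((irreducible_X_sub_C r).coprime_iff_not_dvd.2 hrg).pow_left) hg
  rw [hfk] at hF
  exact ⟨k, g.natDegree, by omega, by omega, hn, F, G, hF, hG, hFG⟩

end Hensel

section AnalyticOrder
open Asymptotics
variable {𝕜 E : Type*} [NontriviallyNormedField 𝕜] [NormedAddCommGroup E] [NormedSpace 𝕜 E]

lemma apply_eq_of_eventually_pow_smul_eq {f g : 𝕜 → E} {x : 𝕜} {k : ℕ} (hf : ContinuousAt f x)
    (hg : ContinuousAt g x) (h : ∀ᶠ t in 𝓝[≠] x, (t - x) ^ k • f t = (t - x) ^ k • g t) :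
    f x = g x := by
  refine tendsto_nhds_unique_of_eventuallyEq (l := 𝓝[≠] x) (hf.mono_left nhdsWithin_le_nhds)
    (hg.mono_left nhdsWithin_le_nhds) ?_
  filter_upwards [h, self_mem_nhdsWithin] with t ht htx
  exact smul_right_injective E (pow_ne_zero k (sub_ne_zero.2 htx)) ht

lemma natCast_le_analyticOrderAt_of_isBigO {f : 𝕜 → E} {x : 𝕜} {k : ℕ} (hf : AnalyticAt 𝕜 f x)
    (h : f =O[𝓝 x] fun t ↦ (t - x) ^ k) : k ≤ analyticOrderAt f x := by
  by_contra! hlt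
  obtain ⟨N, hN⟩ := ENat.ne_top_iff_exists.1 hlt.ne_top
  obtain ⟨g, hg, hgx, hfg⟩ := hf.analyticOrderAt_eq_natCast.1 hN.symm
  have hNk : N < k := by rw [← hN] at hlt; exact_mod_cast hlt
  have hbig : g =O[𝓝[≠] x] fun t ↦ (t - x) ^ (k - N) := by
    obtain ⟨c, hc⟩ := (h.mono nhdsWithin_le_nhds).bound
    refine .of_bound c ?_
    filter_upwards [hc, nhdsWithin_le_nhds hfg, self_mem_nhdsWithin] with t ht hft htx
    have hpos : 0 < ‖(t - x) ^ N‖ := norm_pos_iff.2 (pow_ne_zero N (sub_ne_zero.2 htx))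
    rw [hft, norm_smul, ← Nat.add_sub_of_le hNk.le, pow_add, norm_mul, mul_left_comm] at ht
    exact le_of_mul_le_mul_left ht hpos
  have hlim : Tendsto (fun t ↦ (t - x) ^ (k - N)) (𝓝[≠] x) (𝓝 0) := by
    have : ContinuousAt (fun t ↦ (t - x) ^ (k - N)) x := by fun_prop
    simpa [ContinuousAt, Nat.sub_ne_zero_of_lt hNk] using this.mono_left nhdsWithin_le_nhds
  exact hgx (tendsto_nhds_unique (hg.continuousAt.mono_left nhdsWithin_le_nhds)
    (hbig.trans_tendsto hlim))

lemma even_of_eventually_nonneg_pow_mul {u : ℝ → ℝ} {x : ℝ} {N : ℕ} (hu : ContinuousAt u x)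
    (hux : u x ≠ 0) (h : ∀ᶠ t in 𝓝 x, 0 ≤ (t - x) ^ N * u t) : Even N := by
  by_contra hN
  rw [Nat.not_even_iff_odd] at hN
  refine hux (le_antisymm ?_ ?_)
  · refine le_of_tendsto (hu.mono_left (nhdsWithin_le_nhds (s := Set.Iio x))) ?_
    filter_upwards [nhdsWithin_le_nhds h, self_mem_nhdsWithin] with t ht htx
    exact nonpos_of_mul_nonneg_right ht (hN.pow_neg (sub_neg.2 htx))
  · refine ge_of_tendsto (hu.mono_left (nhdsWithin_le_nhds (s := Set.Ioi x))) ?_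
    filter_upwards [nhdsWithin_le_nhds h, self_mem_nhdsWithin] with t ht htx
    exact nonneg_of_mul_nonneg_right ht (pow_pos (sub_pos.2 htx) N)

end AnalyticOrder

section SplitPolynomials

lemma two_mul_esymm_two {R : Type*} [CommRing R] (s : Multiset R) :
    2 * s.esymm 2 = s.sum ^ 2 - (s.map (· ^ 2)).sum := by
  induction s using Multiset.induction with
  | empty => simp [Multiset.esymm, Multiset.powersetCard_zero_right]
  | cons a s ih =>
    have hcons : (a ::ₘ s).esymm 2 = s.esymm 2 + a * s.sum := by
      simp only [Multiset.esymm, Multiset.powersetCard_cons, Multiset.powersetCard_one,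
        Multiset.map_map, Multiset.map_add, Multiset.sum_add, Function.comp_apply,
        Multiset.prod_cons, Multiset.prod_singleton]
      rw [Multiset.sum_map_mul_left, Multiset.map_id']
    rw [hcons, mul_add, ih, Multiset.sum_cons, Multiset.map_cons, Multiset.sum_cons]
    ring

lemma sum_sq_roots {K : Type*} [Field K] {q : K[X]} (hq : q.Monic) (hs : q.Splits)
    (h2 : 2 ≤ q.natDegree) :
    (q.roots.map (· ^ 2)).sum = q.nextCoeff ^ 2 - 2 * q.coeff (q.natDegree - 2) := by
  have he := coeff_eq_esymm_roots_of_splits hs (k := q.natDegree - 2) (by omega)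
  rw [hq.leadingCoeff, Nat.sub_sub_self h2] at he
  rw [he, hs.nextCoeff_eq_neg_sum_roots_of_monic hq]
  linear_combination two_mul_esymm_two q.roots

variable {q : ℝ[X]}

lemma sum_sq_roots_of_nextCoeff_eq_zero (hq : q.Monic) (hs : q.Splits) (h2 : 2 ≤ q.natDegree)
    (h1 : q.nextCoeff = 0) :
    (q.roots.map (· ^ 2)).sum = -2 * q.coeff (q.natDegree - 2) := by
  rw [sum_sq_roots hq hs h2, h1]
  ring

lemma coeff_natDegree_sub_two_nonpos (hq : q.Monic) (hs : q.Splits) (h2 : 2 ≤ q.natDegree)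
    (h1 : q.nextCoeff = 0) : q.coeff (q.natDegree - 2) ≤ 0 := by
  have h : 0 ≤ (q.roots.map (· ^ 2)).sum := Multiset.sum_nonneg <| by
    simp only [Multiset.mem_map, forall_exists_index, and_imp, forall_apply_eq_imp_iff₂]
    exact fun r _ ↦ sq_nonneg r
  rw [sum_sq_roots_of_nextCoeff_eq_zero hq hs h2 h1] at h
  linarith

lemma abs_coeff_le_of_nextCoeff_eq_zero (hq : q.Monic) (hs : q.Splits) (h2 : 2 ≤ q.natDegree)
    (h1 : q.nextCoeff = 0) (j : ℕ) :
    |q.coeff j| ≤ √(-2 * q.coeff (q.natDegree - 2)) ^ (q.natDegree - j) * q.natDegree.choose j := by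
  have hroot : ∀ r ∈ (q.map (RingHom.id ℝ)).roots, ‖r‖ ≤ √(-2 * q.coeff (q.natDegree - 2)) := by
    intro r hr
    rw [Polynomial.map_id] at hr
    rw [← sum_sq_roots_of_nextCoeff_eq_zero hq hs h2 h1]
    refine Real.abs_le_sqrt (Multiset.single_le_sum ?_ _ (Multiset.mem_map_of_mem (· ^ 2) hr))
    simp only [Multiset.mem_map, forall_exists_index, and_imp, forall_apply_eq_imp_iff₂]
    exact fun r _ ↦ sq_nonneg r
  simpa only [Polynomial.map_id, Real.norm_eq_abs] using
    coeff_le_of_roots_le j hq (by rwa [Polynomial.map_id]) hroot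

lemma eq_X_pow_of_coeff_eq_zero (hq : q.Monic) (hs : q.Splits) (h2 : 2 ≤ q.natDegree)
    (h1 : q.nextCoeff = 0) (h : q.coeff (q.natDegree - 2) = 0) : q = X ^ q.natDegree := by
  refine monic_ext hq (monic_X_pow _) rfl (natDegree_X_pow _) fun j hj ↦ ?_
  have hle := abs_coeff_le_of_nextCoeff_eq_zero hq hs h2 h1 j
  rw [h, mul_zero, Real.sqrt_zero, zero_pow (by omega), zero_mul] at hle
  rw [coeff_X_pow, if_neg hj.ne, abs_nonpos_iff.1 hle]

lemma exists_isRoot_ne_of_nextCoeff_eq_zero (hq : q.Monic) (hs : q.Splits) (h2 : 2 ≤ q.natDegree)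
    (h1 : q.nextCoeff = 0) (h : q.coeff (q.natDegree - 2) ≠ 0) :
    ∃ r s, r ≠ s ∧ q.IsRoot r ∧ q.IsRoot s := by
  obtain ⟨r, hr, hr0⟩ : ∃ r ∈ q.roots, r ≠ 0 := by
    by_contra! hzero
    have hsq : (q.roots.map (· ^ 2)).sum = 0 := Multiset.sum_eq_zero fun y hy ↦ by
      obtain ⟨r, hr, rfl⟩ := Multiset.mem_map.1 hy
      rw [hzero r hr, zero_pow two_ne_zero]
    rw [sum_sq_roots_of_nextCoeff_eq_zero hq hs h2 h1] at hsq
    exact h (by linarith)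
  obtain ⟨s, hs', hsr⟩ : ∃ s ∈ q.roots, s ≠ r := by
    by_contra! hconst
    have hsum := hs.nextCoeff_eq_neg_sum_roots_of_monic hq
    rw [h1, Multiset.eq_replicate_card.2 hconst, Multiset.sum_replicate,
      ← hs.natDegree_eq_card_roots, nsmul_eq_mul] at hsum
    have : (q.natDegree : ℝ) ≠ 0 := by positivity
    exact mul_ne_zero this hr0 (by linarith)
  exact ⟨r, s, hsr.symm, isRoot_of_mem_roots hr, isRoot_of_mem_roots hs'⟩

lemma abs_im_pow_natDegree_le_norm_aeval (hq : q.Monic) (hs : q.Splits) (z : ℂ) :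
    |z.im| ^ q.natDegree ≤ ‖aeval z q‖ := by
  rw [(hs.map (algebraMap ℝ ℂ)).aeval_eq_prod_aroots_of_monic hq, aroots, hs.roots_map,
    Multiset.map_map, hs.natDegree_eq_card_roots]
  induction q.roots using Multiset.induction with
  | empty => simp
  | cons a s ih =>
    rw [Multiset.card_cons, Multiset.map_cons, Multiset.prod_cons, norm_mul, pow_succ, mul_comm]
    gcongr
    simpa using Complex.abs_im_le_norm (z - a)

lemma splits_of_tendsto {ι : Type*} {l : Filter ι} [l.NeBot] {p : ι → ℝ[X]}
    (hm : ∀ᶠ i in l, (p i).Monic) (hd : ∀ᶠ i in l, (p i).natDegree = q.natDegree)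
    (hs : ∀ᶠ i in l, (p i).Splits) (hpq : ∀ j, Tendsto (fun i ↦ (p i).coeff j) l (𝓝 (q.coeff j))) :
    q.Splits := by
  refine Splits.of_splits_map (algebraMap ℝ ℂ) (IsAlgClosed.splits _) fun z hz ↦ ?_
  have hlim : Tendsto (fun i ↦ ‖aeval z (p i)‖) l (𝓝 ‖aeval z q‖) := by
    have hsum : Tendsto (fun i ↦ ∑ j ∈ Finset.range (q.natDegree + 1), (p i).coeff j • z ^ j) l
        (𝓝 (aeval z q)) := by
      rw [aeval_eq_sum_range]
      exact tendsto_finsetSum _ fun j _ ↦ (hpq j).smul_const _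
    refine (hsum.congr' ?_).norm
    filter_upwards [hd] with i hi
    rw [aeval_eq_sum_range, hi]
  have hle : |z.im| ^ q.natDegree ≤ ‖aeval z q‖ := by
    refine ge_of_tendsto hlim ?_
    filter_upwards [hm, hd, hs] with i hmi hdi hsi
    exact hdi ▸ abs_im_pow_natDegree_le_norm_aeval hmi hsi z
  rw [← eval_map_algebraMap, (mem_roots'.1 hz).2, norm_zero] at hle
  have him : z.im = 0 := by
    by_contra him
    exact hle.not_gt (by positivity)
  exact ⟨z.re, Complex.ext (by simp) (by simp [him])⟩

lemma splits_of_splits_scaleRoots {K : Type*} [Field K] {p : K[X]} {s : K} (hs : s ≠ 0)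
    (h : (p.scaleRoots s).Splits) : p.Splits := by
  simpa only [← scaleRoots_mul, mul_inv_cancel₀ hs, scaleRoots_one] using h.scaleRoots s⁻¹

lemma nextCoeff_scaleRoots {R : Type*} [Semiring R] (p : R[X]) (s : R) :
    (p.scaleRoots s).nextCoeff = p.nextCoeff * s := by
  simp only [nextCoeff, natDegree_scaleRoots, coeff_scaleRoots]
  split_ifs with h
  · rw [zero_mul]
  · rw [Nat.sub_sub_self (Nat.pos_of_ne_zero h), pow_one]

lemma nextCoeff_taylor {R : Type*} [CommSemiring R] {p : R[X]} (hp : p.Monic) (c : R) :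
    (taylor c p).nextCoeff = p.nextCoeff + p.natDegree * c := by
  rcases Nat.eq_zero_or_pos p.natDegree with h0 | h0
  · simp [nextCoeff, h0]
  have hd : (hasseDeriv (p.natDegree - 1) p).natDegree < 2 := by
    have := natDegree_hasseDeriv_le p (p.natDegree - 1)
    omega
  rw [nextCoeff_of_natDegree_pos h0, nextCoeff_of_natDegree_pos (by rwa [natDegree_taylor]),
    natDegree_taylor, taylor_coeff, eval_eq_sum_range' hd, Finset.sum_range_succ,
    Finset.sum_range_one, hasseDeriv_coeff, hasseDeriv_coeff, zero_add, Nat.choose_self,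
    Nat.add_sub_of_le h0, hp.coeff_natDegree, Nat.choose_symm h0, Nat.choose_one_right]
  simp

end SplitPolynomials

section RootFamilies
variable {𝕜 E : Type*} [NontriviallyNormedField 𝕜] [NormedAddCommGroup E] [NormedSpace 𝕜 E]
  {n k l : ℕ} {p q : E → 𝕜[X]} {x : E} {c : E → 𝕜}

/-- Near `x`, the polynomials `p t` are products of `n` linear factors whose roots are analytic
at `x` as functions of the parameter. -/
def HasAnalyticRoots (n : ℕ) (p : E → 𝕜[X]) (x : E) : Prop :=
  ∃ μ : Fin n → E → 𝕜, (∀ i, AnalyticAt 𝕜 (μ i) x) ∧ ∀ᶠ t in 𝓝 x, p t = ∏ i, (X - C (μ i t))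

namespace HasAnalyticRoots

lemma congr (hp : HasAnalyticRoots n p x) (hpq : p =ᶠ[𝓝 x] q) : HasAnalyticRoots n q x := by
  obtain ⟨μ, hμ, hprod⟩ := hp
  exact ⟨μ, hμ, hpq.symm.trans hprod⟩

lemma mul (hp : HasAnalyticRoots k p x) (hq : HasAnalyticRoots l q x) :
    HasAnalyticRoots (k + l) (fun t ↦ p t * q t) x := by
  obtain ⟨μ, hμ, hpμ⟩ := hp
  obtain ⟨ν, hν, hqν⟩ := hq
  refine ⟨Fin.append μ ν, fun i ↦ ?_, ?_⟩
  · induction i using Fin.addCases with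
    | left i => simpa only [Fin.append_left] using hμ i
    | right i => simpa only [Fin.append_right] using hν i
  · filter_upwards [hpμ, hqν] with t hpt hqt
    simp only [hpt, hqt, Fin.prod_univ_add, Fin.append_left, Fin.append_right]

lemma scaleRoots (hp : HasAnalyticRoots n p x) (hc : AnalyticAt 𝕜 c x) :
    HasAnalyticRoots n (fun t ↦ (p t).scaleRoots (c t)) x := by
  obtain ⟨μ, hμ, hpμ⟩ := hp
  refine ⟨fun i t ↦ μ i t * c t, fun i ↦ (hμ i).mul hc, ?_⟩
  filter_upwards [hpμ] with t ht
  rw [ht]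
  induction (Finset.univ : Finset (Fin n)) using Finset.cons_induction with
  | empty => simp only [Finset.prod_empty, one_scaleRoots]
  | cons i s hi ih =>
    rw [Finset.prod_cons, Finset.prod_cons, mul_scaleRoots_of_noZeroDivisors, ih,
      X_sub_C_scaleRoots]

lemma taylor (hp : HasAnalyticRoots n p x) (hc : AnalyticAt 𝕜 c x) :
    HasAnalyticRoots n (fun t ↦ taylor (c t) (p t)) x := by
  obtain ⟨μ, hμ, hpμ⟩ := hp
  refine ⟨fun i t ↦ μ i t - c t, fun i ↦ (hμ i).sub hc, ?_⟩
  filter_upwards [hpμ] with t ht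
  rw [ht, taylor_apply, Polynomial.prod_comp]
  refine Finset.prod_congr rfl fun i _ ↦ ?_
  rw [sub_comp, X_comp, C_comp, C_sub]
  ring

end HasAnalyticRoots

namespace AnalyticMonicFamily

lemma analyticAt_nextCoeff (hp : AnalyticMonicFamily n p x) :
    AnalyticAt 𝕜 (fun t ↦ (p t).nextCoeff) x := by
  simp only [nextCoeff, hp.natDegree_eq]
  split_ifs
  · exact analyticAt_const
  · exact hp.analyticAt_coeff _

lemma taylor (hp : AnalyticMonicFamily n p x) (hc : AnalyticAt 𝕜 c x) :
    AnalyticMonicFamily n (fun t ↦ taylor (c t) (p t)) x where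
  monic t := (leadingCoeff_taylor (r := c t) (p t)).trans (hp.monic t)
  natDegree_eq t := (natDegree_taylor _ _).trans (hp.natDegree_eq t)
  analyticAt_coeff j := by
    have hcoeff : ∀ t, (Polynomial.taylor (c t) (p t)).coeff j = ∑ i ∈ Finset.range (n + 1),
        ((i + j).choose j : 𝕜) * (p t).coeff (i + j) * c t ^ i := fun t ↦ by
      have hd : (hasseDeriv j (p t)).natDegree < n + 1 :=
        Nat.lt_succ_of_le <| (natDegree_hasseDeriv_le _ _).trans <|
          (Nat.sub_le _ _).trans (hp.natDegree_eq t).le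
      simp only [taylor_coeff, eval_eq_sum_range' hd, hasseDeriv_coeff]
    simp only [hcoeff]
    exact Finset.analyticAt_fun_sum _ fun i _ ↦
      (analyticAt_const.mul (hp.analyticAt_coeff _)).mul (hc.pow i)

lemma exists_scaleRoots [CompleteSpace 𝕜] {p : 𝕜 → 𝕜[X]} {x : 𝕜} {m : ℕ}
    (hp : AnalyticMonicFamily n p x)
    (hord : ∀ j < n, ↑(m * (n - j)) ≤ analyticOrderAt (fun t ↦ (p t).coeff j) x) :
    ∃ q : 𝕜 → 𝕜[X], AnalyticMonicFamily n q x ∧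
      ∀ᶠ t in 𝓝 x, p t = (q t).scaleRoots ((t - x) ^ m) := by
  choose a ha hpa using fun j : Fin n ↦
    (natCast_le_analyticOrderAt (hp.analyticAt_coeff j)).1 (hord j j.2)
  refine ⟨_, .of_coeffs (analyticAt_pi_iff.2 ha), ?_⟩
  filter_upwards [eventually_all.2 hpa] with t ht
  refine monic_ext (hp.monic t) ((monic_scaleRoots_iff _).2 (monicOfCoeffs_monic _))
    (hp.natDegree_eq t) ((natDegree_scaleRoots _ _).trans (monicOfCoeffs_natDegree _))
    fun j hj ↦ ?_
  rw [coeff_scaleRoots, monicOfCoeffs_natDegree, ← pow_mul, mul_comm]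
  exact (ht ⟨j, hj⟩).trans (congrArg _ (monicOfCoeffs_coeff (fun i ↦ a i t) ⟨j, hj⟩).symm)

lemma hasAnalyticRoots_of_le_one (hp : AnalyticMonicFamily n p x) (hn : n ≤ 1) :
    HasAnalyticRoots n p x := by
  refine ⟨fun _ t ↦ -(p t).coeff 0, fun _ ↦ (hp.analyticAt_coeff 0).neg, .of_forall fun t ↦ ?_⟩
  rcases Nat.le_one_iff_eq_zero_or_eq_one.1 hn with rfl | rfl
  · rw [Fin.prod_univ_zero, eq_one_of_monic_natDegree_zero (hp.monic t) (hp.natDegree_eq t)]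
  · rw [Fin.prod_univ_one, C_neg, sub_neg_eq_add]
    exact (hp.monic t).eq_X_add_C (hp.natDegree_eq t)

end AnalyticMonicFamily

end RootFamilies

section Rellich
variable {n m : ℕ} {p : ℝ → ℝ[X]} {x : ℝ}

namespace AnalyticMonicFamily

lemma mul_le_analyticOrderAt_coeff (hp : AnalyticMonicFamily n p x) (hn : 2 ≤ n)
    (hs : ∀ᶠ t in 𝓝 x, (p t).Splits) (h1 : ∀ᶠ t in 𝓝 x, (p t).nextCoeff = 0)
    {u : ℝ → ℝ} (hu : ContinuousAt u x)
    (hpu : ∀ᶠ t in 𝓝 x, (p t).coeff (n - 2) = (t - x) ^ (2 * m) * u t) (j : ℕ) :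
    ↑(m * (n - j)) ≤ analyticOrderAt (fun t ↦ (p t).coeff j) x := by
  refine natCast_le_analyticOrderAt_of_isBigO (hp.analyticAt_coeff j) ?_
  have hsqrt : (fun t ↦ √(-2 * (p t).coeff (n - 2))) =O[𝓝 x] fun t ↦ (t - x) ^ m := by
    have hbdd : (fun t ↦ √(-2 * u t)) =O[𝓝 x] fun _ ↦ (1 : ℝ) :=
      (Real.continuous_sqrt.continuousAt.comp (hu.const_mul (-2))).isBigO_one ℝ
    refine ((Asymptotics.isBigO_refl (fun t ↦ (t - x) ^ m) (𝓝 x)).norm_left.mul hbdd).congr'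
      ?_ (by simp)
    filter_upwards [hpu] with t ht
    rw [ht, pow_mul', mul_left_comm, Real.sqrt_mul (sq_nonneg _), Real.sqrt_sq_eq_abs,
      Real.norm_eq_abs]
  simp only [pow_mul]
  refine .trans (.of_bound (n.choose j) ?_) (hsqrt.pow (n - j))
  filter_upwards [hs, h1] with t hst h1t
  have hle := abs_coeff_le_of_nextCoeff_eq_zero (hp.monic t) hst (by rwa [hp.natDegree_eq]) h1t j
  rw [hp.natDegree_eq] at hle
  rwa [norm_pow, Real.norm_of_nonneg (Real.sqrt_nonneg _), mul_comm]

lemma exists_coeff_eq_pow_two_mul (hp : AnalyticMonicFamily n p x) (hn : 2 ≤ n)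
    (hs : ∀ᶠ t in 𝓝 x, (p t).Splits) (h1 : ∀ᶠ t in 𝓝 x, (p t).nextCoeff = 0)
    (h2 : ¬∀ᶠ t in 𝓝 x, (p t).coeff (n - 2) = 0) :
    ∃ (m : ℕ) (u : ℝ → ℝ), ContinuousAt u x ∧ u x ≠ 0 ∧
      ∀ᶠ t in 𝓝 x, (p t).coeff (n - 2) = (t - x) ^ (2 * m) * u t := by
  have hc := hp.analyticAt_coeff (n - 2)
  obtain ⟨u, hu, hux, hcu⟩ := hc.analyticOrderAt_ne_top.1 (mt analyticOrderAt_eq_top.1 h2)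
  simp only [smul_eq_mul] at hcu
  obtain ⟨m, hm⟩ : Even (analyticOrderNatAt (fun t ↦ (p t).coeff (n - 2)) x) := by
    refine even_of_eventually_nonneg_pow_mul hu.continuousAt.neg (neg_ne_zero.2 hux) ?_
    filter_upwards [hcu, hs, h1] with t hcut hst h1t
    have hle := coeff_natDegree_sub_two_nonpos (hp.monic t) hst (by rwa [hp.natDegree_eq]) h1t
    rw [hp.natDegree_eq, hcut] at hle
    simpa using hle
  rw [hm, ← two_mul] at hcu
  exact ⟨m, u, hu.continuousAt, hux, hcu⟩

lemma eventually_splits_of_eventually_ne (hp : AnalyticMonicFamily n p x)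
    (hs : ∀ᶠ t in 𝓝[≠] x, (p t).Splits) : ∀ᶠ t in 𝓝 x, (p t).Splits := by
  have hx : (p x).Splits := splits_of_tendsto (.of_forall hp.monic)
    (.of_forall fun t ↦ (hp.natDegree_eq t).trans (hp.natDegree_eq x).symm) hs
    fun j ↦ (hp.analyticAt_coeff j).continuousAt.mono_left nhdsWithin_le_nhds
  filter_upwards [eventually_nhdsWithin_iff.1 hs] with t ht
  exact (eq_or_ne t x).elim (fun h ↦ h ▸ hx) ht

lemma exists_scaleRoots_of_nextCoeff_eq_zero (hp : AnalyticMonicFamily n p x) (hn : 2 ≤ n)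
    (hs : ∀ᶠ t in 𝓝 x, (p t).Splits) (h1 : ∀ᶠ t in 𝓝 x, (p t).nextCoeff = 0)
    (h2 : ¬∀ᶠ t in 𝓝 x, (p t).coeff (n - 2) = 0) :
    ∃ (m : ℕ) (q : ℝ → ℝ[X]), AnalyticMonicFamily n q x ∧ (∀ᶠ t in 𝓝 x, (q t).Splits) ∧
      (∃ r s, r ≠ s ∧ (q x).IsRoot r ∧ (q x).IsRoot s) ∧
      ∀ᶠ t in 𝓝 x, p t = (q t).scaleRoots ((t - x) ^ m) := by
  obtain ⟨m, u, hu, hux, hpu⟩ := hp.exists_coeff_eq_pow_two_mul hn hs h1 h2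
  obtain ⟨q, hq, hpq⟩ := hp.exists_scaleRoots fun j _ ↦
    hp.mul_le_analyticOrderAt_coeff hn hs h1 hu hpu j
  have hqs : ∀ᶠ t in 𝓝 x, (q t).Splits := by
    refine hq.eventually_splits_of_eventually_ne ?_
    filter_upwards [nhdsWithin_le_nhds hs, nhdsWithin_le_nhds hpq, self_mem_nhdsWithin]
      with t hst hpqt htx
    exact splits_of_splits_scaleRoots (pow_ne_zero m (sub_ne_zero.2 htx)) (hpqt ▸ hst)
  have hq1 : (q x).nextCoeff = 0 := by
    refine apply_eq_of_eventually_pow_smul_eq (k := m) (f := fun t ↦ (q t).nextCoeff)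
      (g := fun _ ↦ 0) hq.analyticAt_nextCoeff.continuousAt continuousAt_const ?_
    filter_upwards [nhdsWithin_le_nhds h1, nhdsWithin_le_nhds hpq] with t h1t hpqt
    rw [smul_zero, smul_eq_mul, mul_comm, ← nextCoeff_scaleRoots, ← hpqt, h1t]
  have hq2 : (q x).coeff (n - 2) = u x := by
    refine apply_eq_of_eventually_pow_smul_eq (k := 2 * m) (f := fun t ↦ (q t).coeff (n - 2))
      (hq.analyticAt_coeff _).continuousAt hu ?_
    filter_upwards [nhdsWithin_le_nhds hpu, nhdsWithin_le_nhds hpq] with t hput hpqt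
    rw [hpqt, coeff_scaleRoots, hq.natDegree_eq, Nat.sub_sub_self hn, ← pow_mul'] at hput
    rw [smul_eq_mul, smul_eq_mul, ← hput, mul_comm]
  exact ⟨m, q, hq, hqs, exists_isRoot_ne_of_nextCoeff_eq_zero (hq.monic x) hqs.self_of_nhds
    (by rwa [hq.natDegree_eq]) hq1 (by rwa [hq.natDegree_eq, hq2]), hpq⟩

lemma hasAnalyticRoots_of_nextCoeff_eq_zero (hp : AnalyticMonicFamily n p x) (hn : 2 ≤ n)
    (hs : ∀ᶠ t in 𝓝 x, (p t).Splits) (h1 : ∀ᶠ t in 𝓝 x, (p t).nextCoeff = 0)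
    (ih : ∀ k < n, ∀ q : ℝ → ℝ[X], AnalyticMonicFamily k q x → (∀ᶠ t in 𝓝 x, (q t).Splits) →
      HasAnalyticRoots k q x) :
    HasAnalyticRoots n p x := by
  by_cases h2 : ∀ᶠ t in 𝓝 x, (p t).coeff (n - 2) = 0
  · refine ⟨fun _ _ ↦ 0, fun _ ↦ analyticAt_const, ?_⟩
    filter_upwards [hs, h1, h2] with t hst h1t h2t
    rw [C_0, sub_zero, Finset.prod_const, Finset.card_fin]
    simpa only [hp.natDegree_eq] using eq_X_pow_of_coeff_eq_zero (hp.monic t) hst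
      (by rwa [hp.natDegree_eq]) h1t (by rwa [hp.natDegree_eq])
  obtain ⟨m, q, hq, hqs, ⟨r, s, hrs, hr, hs⟩, hpq⟩ :=
    hp.exists_scaleRoots_of_nextCoeff_eq_zero hn hs h1 h2
  obtain ⟨k, l, hk, hl, rfl, F, G, hF, hG, hFG⟩ := hq.exists_factorization_of_isRoot hrs hr hs
  have hFs : ∀ᶠ t in 𝓝 x, (F t).Splits := by
    filter_upwards [hqs, hFG] with t hqt hFGt
    exact hqt.of_dvd (hq.monic t).ne_zero ⟨G t, hFGt⟩
  have hGs : ∀ᶠ t in 𝓝 x, (G t).Splits := by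
    filter_upwards [hqs, hFG] with t hqt hFGt
    exact hqt.of_dvd (hq.monic t).ne_zero (hFGt ▸ dvd_mul_left _ _)
  refine (((ih k hk F hF hFs).mul (ih l hl G hG hGs)).scaleRoots
    (c := fun t ↦ (t - x) ^ m) (by fun_prop)).congr ?_
  filter_upwards [hpq, hFG] with t hpqt hFGt
  rw [hpqt, hFGt]

theorem hasAnalyticRoots (hp : AnalyticMonicFamily n p x) (hs : ∀ᶠ t in 𝓝 x, (p t).Splits) :
    HasAnalyticRoots n p x := by
  induction n using Nat.strong_induction_on generalizing p with
  | _ n ih =>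
  rcases Nat.lt_or_ge 1 n with hn | hn
  · have hc : AnalyticAt ℝ (fun t ↦ -(p t).nextCoeff / n) x := hp.analyticAt_nextCoeff.neg.div_const
    have hcentred := (hp.taylor hc).hasAnalyticRoots_of_nextCoeff_eq_zero hn
      (hs.mono fun t ht ↦ ht.taylor _)
      (.of_forall fun t ↦ by
        rw [nextCoeff_taylor (hp.monic t), hp.natDegree_eq,
          mul_div_cancel₀ _ (Nat.cast_ne_zero.2 (by omega)), add_neg_cancel])
      fun k hk q hq hqs ↦ ih k hk hq hqs
    refine (hcentred.taylor hc.neg).congr (.of_forall fun t ↦ ?_)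
    simp only [Pi.neg_apply, taylor_taylor, neg_add_cancel, taylor_zero]
  · exact hp.hasAnalyticRoots_of_le_one hn

end AnalyticMonicFamily

end Rellich

section Sorting
variable {n : ℕ} {x : ℝ}

lemma exists_perm_eventually_monotone {α β : Type*} [LinearOrder β] {l : Filter α} [l.NeBot]
    {μ : Fin n → α → β}
    (h : ∀ i j, (∀ᶠ t in l, μ i t ≤ μ j t) ∨ ∀ᶠ t in l, μ j t < μ i t) :
    ∃ π : Equiv.Perm (Fin n), ∀ᶠ t in l, Monotone fun i ↦ μ (π i) t := by
  have hall : ∀ᶠ t in l, ∀ i j, μ i t ≤ μ j t → ∀ᶠ s in l, μ i s ≤ μ j s := by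
    refine eventually_all.2 fun i ↦ eventually_all.2 fun j ↦ ?_
    rcases h i j with hle | hlt
    · exact .of_forall fun _ _ ↦ hle
    · filter_upwards [hlt] with t ht hle using absurd hle ht.not_ge
  obtain ⟨t₀, ht₀⟩ := hall.exists
  refine ⟨Tuple.sort fun i ↦ μ i t₀, ?_⟩
  have hmono := Tuple.monotone_sort fun i ↦ μ i t₀
  simp only [Monotone, eventually_all]
  exact fun i j hij ↦ ht₀ _ _ (hmono hij)

lemma eventually_nonneg_or_neg_nhdsGT {f : ℝ → ℝ} (hf : AnalyticAt ℝ f x) :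
    (∀ᶠ t in 𝓝[>] x, 0 ≤ f t) ∨ ∀ᶠ t in 𝓝[>] x, f t < 0 := by
  by_cases htop : analyticOrderAt f x = ⊤
  · exact .inl (nhdsWithin_le_nhds ((analyticOrderAt_eq_top.1 htop).mono fun t ht ↦ ht.ge))
  obtain ⟨u, hu, hux, hfu⟩ := hf.analyticOrderAt_ne_top.1 htop
  rcases hux.lt_or_gt with hneg | hpos
  · right
    filter_upwards [nhdsWithin_le_nhds hfu, self_mem_nhdsWithin,
      nhdsWithin_le_nhds (hu.continuousAt.eventually_lt_const hneg)] with t ht htx hut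
    exact ht ▸ mul_neg_of_pos_of_neg (pow_pos (sub_pos.2 htx) _) hut
  · left
    filter_upwards [nhdsWithin_le_nhds hfu, self_mem_nhdsWithin,
      nhdsWithin_le_nhds (hu.continuousAt.eventually_const_lt hpos)] with t ht htx hut
    exact ht ▸ (mul_pos (pow_pos (sub_pos.2 htx) _) hut).le

lemma exists_perm_eventually_monotone_nhdsGE {μ : Fin n → ℝ → ℝ}
    (hμ : ∀ i, AnalyticAt ℝ (μ i) x) :
    ∃ π : Equiv.Perm (Fin n), ∀ᶠ t in 𝓝[≥] x, Monotone fun i ↦ μ (π i) t := by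
  obtain ⟨π, hπ⟩ := exists_perm_eventually_monotone (l := 𝓝[>] x) (μ := μ) fun i j ↦ by
    simpa only [Pi.sub_apply, sub_nonneg, sub_neg] using
      eventually_nonneg_or_neg_nhdsGT ((hμ j).sub (hμ i))
  have hπx : Monotone fun i ↦ μ (π i) x := fun i j hij ↦
    le_of_tendsto_of_tendsto (b := 𝓝[>] x)
      ((hμ (π i)).continuousAt.mono_left nhdsWithin_le_nhds)
      ((hμ (π j)).continuousAt.mono_left nhdsWithin_le_nhds) (hπ.mono fun t ht ↦ ht hij)
  refine ⟨π, ?_⟩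
  rw [← Set.Ioi_insert, nhdsWithin_insert]
  exact eventually_sup.2 ⟨hπx, hπ⟩

lemma exists_perm_eventually_monotone_nhdsLE {μ : Fin n → ℝ → ℝ}
    (hμ : ∀ i, AnalyticAt ℝ (μ i) x) :
    ∃ π : Equiv.Perm (Fin n), ∀ᶠ t in 𝓝[≤] x, Monotone fun i ↦ μ (π i) t := by
  obtain ⟨π, hπ⟩ := exists_perm_eventually_monotone_nhdsGE (x := -x) (μ := fun i t ↦ μ i (-t))
    fun i ↦ AnalyticAt.fun_comp (by rw [neg_neg]; exact hμ i) analyticAt_id.neg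
  have hneg : Tendsto Neg.neg (𝓝[≤] x) (𝓝[≥] (-x)) := tendsto_neg_nhdsLE
  exact ⟨π, by simpa only [neg_neg] using hneg.eventually hπ⟩

end Sorting

section Eigenvalues
variable {n : ℕ}

lemma eq_of_monotone_of_prod_X_sub_C_eq {R : Type*} [CommRing R] [IsDomain R] [LinearOrder R]
    {f g : Fin n → R} (hf : Monotone f) (hg : Monotone g)
    (h : ∏ i, (X - C (f i)) = ∏ i, (X - C (g i))) : f = g := by
  have hroots : ∀ f : Fin n → R, (∏ i, (X - C (f i))).roots = ↑(List.ofFn f) := fun f ↦ by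
    rw [← Fin.univ_val_map, ← roots_multiset_prod_X_sub_C (Finset.univ.val.map f),
      Multiset.map_map]
    rfl
  have hperm := congrArg roots h
  rw [hroots, hroots, Multiset.coe_eq_coe] at hperm
  exact List.ofFn_injective (hperm.eq_of_sortedLE (List.sortedLE_ofFn_iff.2 hf)
    (List.sortedLE_ofFn_iff.2 hg))

lemma eigs_monotone (H : Matrix (Fin n) (Fin n) ℂ) : Monotone (eigs H) := by
  unfold eigs
  split_ifs with hH
  · exact Tuple.monotone_sort _
  · exact monotone_const

lemma charpoly_eq_map_prod_eigs {H : Matrix (Fin n) (Fin n) ℂ} (hH : H.IsHermitian) :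
    H.charpoly = (∏ i, (X - C (eigs H i))).map (algebraMap ℝ ℂ) := by
  simp only [hH.charpoly_eq, eigs, dif_pos hH, Polynomial.map_prod, Polynomial.map_sub,
    Polynomial.map_X, Polynomial.map_C, Function.comp_apply]
  exact (Equiv.prod_comp (Tuple.sort hH.eigenvalues)
    fun i ↦ X - C (algebraMap ℝ ℂ (hH.eigenvalues i))).symm

lemma analyticAt_charpoly_coeff {𝕜 A E ι : Type*} [NontriviallyNormedField 𝕜] [NormedCommRing A]
    [NormedAlgebra 𝕜 A] [NormedAddCommGroup E] [NormedSpace 𝕜 E] [Fintype ι] [DecidableEq ι]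
    {H : E → Matrix ι ι A} {x : E} (hH : AnalyticAt 𝕜 H x) (j : ℕ) :
    AnalyticAt 𝕜 (fun t ↦ (H t).charpoly.coeff j) x := by
  have hentry : ∀ ij : ι × ι, AnalyticAt 𝕜 (fun t ↦ H t ij.1 ij.2) x := fun ij ↦
    analyticAt_pi_iff.1 (analyticAt_pi_iff.1 hH ij.1) ij.2
  refine (AnalyticAt.aeval_mvPolynomial hentry ((charpoly.univ 𝕜 ι).coeff j)).congr
    (.of_forall fun t ↦ ?_)
  exact charpoly.univ_coeff_eval₂Hom ι (algebraMap 𝕜 A) (fun ij : ι × ι ↦ H t ij.1 ij.2) j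

variable {H : ℝ → Matrix (Fin n) (Fin n) ℂ} {x : ℝ}

lemma analyticMonicFamily_prod_eigs (hH : AnalyticAt ℝ H x)
    (hherm : ∀ᶠ t in 𝓝 x, (H t).IsHermitian) :
    AnalyticMonicFamily n (fun t ↦ ∏ i, (X - C (eigs (H t) i))) x where
  monic t := monic_prod_X_sub_C _ _
  natDegree_eq t := by simp
  analyticAt_coeff j := by
    refine ((Complex.reCLM.analyticAt _).comp (analyticAt_charpoly_coeff hH j)).congr ?_
    filter_upwards [hherm] with t ht
    simp [charpoly_eq_map_prod_eigs ht, coeff_map]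

theorem exists_perm_analyticAt_eigs (hH : AnalyticAt ℝ H x)
    (hherm : ∀ᶠ t in 𝓝 x, (H t).IsHermitian) :
    ∃ σ : Equiv.Perm (Fin n), ∀ i, AnalyticAt ℝ
      (fun t ↦ if x ≤ t then eigs (H t) i else eigs (H t) (σ i)) x := by
  obtain ⟨μ, hμ, hprod⟩ := (analyticMonicFamily_prod_eigs hH hherm).hasAnalyticRoots
    (.of_forall fun t ↦ Splits.prod fun i _ ↦ Splits.X_sub_C _)
  have heigs : ∀ (π : Equiv.Perm (Fin n)) {l : Filter ℝ}, l ≤ 𝓝 x →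
      (∀ᶠ t in l, Monotone fun i ↦ μ (π i) t) → ∀ᶠ t in l, ∀ i, eigs (H t) i = μ (π i) t := by
    intro π l hl hmono
    filter_upwards [hl hprod, hmono] with t ht hmt
    refine congrFun (eq_of_monotone_of_prod_X_sub_C_eq (eigs_monotone _) hmt ?_)
    exact ht.trans (Equiv.prod_comp π fun i ↦ X - C (μ i t)).symm
  obtain ⟨π, hπ⟩ := exists_perm_eventually_monotone_nhdsGE hμ
  obtain ⟨ρ, hρ⟩ := exists_perm_eventually_monotone_nhdsLE hμ
  refine ⟨π.trans ρ.symm, fun i ↦ (hμ (π i)).congr ?_⟩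
  filter_upwards [eventually_nhdsWithin_iff.1 (heigs π nhdsWithin_le_nhds hπ),
    eventually_nhdsWithin_iff.1 (heigs ρ nhdsWithin_le_nhds hρ)] with t hright hleft
  split_ifs with hxt
  · exact (hright hxt i).symm
  · simp [hleft (not_le.1 hxt).le]

end Eigenvalues

end

/-- **The eigenvalues of an analytic one-parameter Hermitian family are analytic**, after a
suitable permutation of the indexing for negative `t`; in particular, for each small `t` the
values `λ̃_1(t), …, λ̃_n(t)` form the multiset of eigenvalues of `H(t)` with multiplicity. -/
theorem eigenvalues_analytic {n : ℕ} (H : ℝ → Matrix (Fin n) (Fin n) ℂ)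
    (δ : ℝ) (hδ : 0 < δ) (hanal : AnalyticOnNhd ℝ H (Set.Ioo (-δ) δ))
    (hherm : ∀ t ∈ Set.Ioo (-δ) δ, (H t).IsHermitian) :
    ∃ ε > 0, ε ≤ δ ∧ ∃ σ : Equiv.Perm (Fin n),
      (∀ i : Fin n, AnalyticOnNhd ℝ
        (fun t => if 0 ≤ t then eigs (H t) i else eigs (H t) (σ i)) (Set.Ioo (-ε) ε)) ∧
      ∀ t ∈ Set.Ioo (-ε) ε,
        (Finset.univ.val.map fun i : Fin n =>
            if 0 ≤ t then eigs (H t) i else eigs (H t) (σ i))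
          = Finset.univ.val.map fun i : Fin n => eigs (H t) i := by
  have h0 : (0 : ℝ) ∈ Set.Ioo (-δ) δ := ⟨neg_neg_iff_pos.2 hδ, hδ⟩
  obtain ⟨σ, hσ⟩ := exists_perm_analyticAt_eigs (hanal 0 h0)
    (Filter.eventually_of_mem (Ioo_mem_nhds h0.1 h0.2) hherm)
  obtain ⟨ε, hε, hball⟩ := Metric.eventually_nhds_iff_ball.1
    (Filter.eventually_all.2 fun i ↦ (hσ i).eventually_analyticAt)
  rw [Real.ball_eq_Ioo, zero_sub, zero_add] at hball
  refine ⟨min ε δ, lt_min hε hδ, min_le_right _ _, σ, fun i t ht ↦ ?_, fun t _ ↦ ?_⟩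
  · exact hball t (Set.Ioo_subset_Ioo (neg_le_neg (min_le_left _ _)) (min_le_left _ _) ht) i
  · split_ifs
    · rfl
    · exact (Multiset.map_map _ σ _).symm.trans (congrArg _ (Multiset.map_univ_val_equiv σ))

end
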